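/- arXiv:1912.02643 — 2 statements merged into one kernel-verified Lean document; each statement's English description precedes it below -/
import Mathlib

section
/- Let A be an n×n complex matrix satisfying Re(x*Ax) ≥ 0 for all x ∈ ℂⁿ, and let γ, γ̃ be real numbers with 0 < γ̃ ≤ γ. Then the spectral radius of the matrix G̃ := I − (I + γA)⁻¹(I + γ̃A) satisfies ρ(G̃) ≤ 1 − γ̃/γ. -/
open Matrix

/-!
For accretive `T` we have `‖T y‖ ≤ ‖(1 + T) y‖`. Put `y = (1 + T)⁻¹ x`: this says that
`1 - (1 + T)⁻¹ = T (1 + T)⁻¹` is a contraction. With `T = γA` and `c = γ̃/γ`, the iteration matrix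
`1 - (1 + T)⁻¹ (1 + c T)` is exactly `(1 - c)` times this contraction.
-/

open scoped InnerProductSpace Ring

lemma map_ringInverse {F M N : Type*} [MonoidWithZero M] [MonoidWithZero N] [EquivLike F M N]
    [MulEquivClass F M N] (f : F) (a : M) : f a⁻¹ʳ = (f a)⁻¹ʳ := by
  by_cases ha : IsUnit a
  · rw [← mul_one (f a)⁻¹ʳ, eq_comm, Ring.inverse_mul_eq_iff_eq_mul _ _ _ (ha.map f), ← map_mul,
      Ring.mul_inverse_cancel a ha, map_one]
  · rw [Ring.inverse_non_unit a ha, Ring.inverse_non_unit _ (mt (isUnit_map_iff f a).mp ha),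
      map_zero]

lemma one_sub_ringInverse_one_add_mul_one_add_smul {R A : Type*} [CommRing R] [Ring A]
    [Algebra R A] {a : A} (ha : IsUnit (1 + a)) (c : R) :
    1 - (1 + a)⁻¹ʳ * (1 + c • a) = (1 - c) • (1 - (1 + a)⁻¹ʳ) := by
  have inverse_mul : (1 + a)⁻¹ʳ * a = 1 - (1 + a)⁻¹ʳ := by
    rw [eq_sub_iff_add_eq', ← mul_one_add, Ring.inverse_mul_cancel _ ha]
  rw [mul_add, mul_one, mul_smul_comm, inverse_mul]
  module

lemma spectralRadius_map {F 𝕜 A B : Type*} [NormedField 𝕜] [Ring A] [Ring B] [Algebra 𝕜 A]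
    [Algebra 𝕜 B] [EquivLike F A B] [AlgEquivClass F 𝕜 A B] (f : F) (a : A) :
    spectralRadius 𝕜 (f a) = spectralRadius 𝕜 a := by
  simp only [spectralRadius, AlgEquiv.spectrum_eq]

lemma spectralRadius_le_enorm {𝕜 E : Type*} [NontriviallyNormedField 𝕜] [NormedAddCommGroup E]
    [NormedSpace 𝕜 E] [CompleteSpace E] (T : E →L[𝕜] E) : spectralRadius 𝕜 T ≤ ‖T‖ₑ := by
  cases subsingleton_or_nontrivial E
  · simp
  · exact spectrum.spectralRadius_le_nnnorm T

section Accretive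

variable {𝕜 E : Type*} [RCLike 𝕜] [NormedAddCommGroup E] [InnerProductSpace 𝕜 E]

lemma norm_le_norm_add_of_re_inner_nonneg {x y : E} (h : 0 ≤ RCLike.re ⟪x, y⟫_𝕜) :
    ‖x‖ ≤ ‖x + y‖ := by
  refine le_of_sq_le_sq ?_ (norm_nonneg _)
  rw [norm_add_sq (𝕜 := 𝕜)]
  linarith [sq_nonneg ‖y‖]

/-- A bounded operator `T` is accretive if its numerical range `{⟪T x, x⟫ | ‖x‖ = 1}` lies in the
closed right half-plane. For a matrix `A` this is the condition `0 ≤ Re (x* A x)`. -/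
def IsAccretive (T : E →L[𝕜] E) : Prop :=
  ∀ x, 0 ≤ T.reApplyInnerSelf x

namespace IsAccretive

variable {T : E →L[𝕜] E}

lemma ofReal_smul (hT : IsAccretive T) {r : ℝ} (hr : 0 ≤ r) : IsAccretive ((r : 𝕜) • T) := by
  intro x
  have hx : 0 ≤ RCLike.re ⟪T x, x⟫_𝕜 := hT x
  simpa [ContinuousLinearMap.reApplyInnerSelf_apply, inner_smul_left] using mul_nonneg hr hx

lemma norm_apply_le (hT : IsAccretive T) (x : E) : ‖T x‖ ≤ ‖(1 + T) x‖ := by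
  simpa [add_comm] using norm_le_norm_add_of_re_inner_nonneg (hT x)

variable [CompleteSpace E]

lemma isUnit_one_add (hT : IsAccretive T) : IsUnit (1 + T) := by
  refine ContinuousLinearMap.isUnit_of_forall_le_norm_inner_map _ zero_lt_one fun x => ?_
  calc ‖x‖ ^ 2 * (1 : NNReal) ≤ ‖x‖ ^ 2 + T.reApplyInnerSelf x := by simpa using hT x
    _ = RCLike.re ⟪(1 + T) x, x⟫_𝕜 := by
      simp [inner_add_left, ContinuousLinearMap.reApplyInnerSelf_apply]
    _ ≤ ‖⟪(1 + T) x, x⟫_𝕜‖ := RCLike.re_le_norm _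

lemma norm_one_sub_ringInverse_one_add_le_one (hT : IsAccretive T) : ‖1 - (1 + T)⁻¹ʳ‖ ≤ 1 := by
  have one_sub_eq : 1 - (1 + T)⁻¹ʳ = T * (1 + T)⁻¹ʳ := by
    rw [sub_eq_iff_eq_add', ← one_add_mul, Ring.mul_inverse_cancel _ hT.isUnit_one_add]
  refine ContinuousLinearMap.opNorm_le_bound _ zero_le_one fun x => ?_
  calc ‖(1 - (1 + T)⁻¹ʳ) x‖ = ‖T ((1 + T)⁻¹ʳ x)‖ := by rw [one_sub_eq]; rfl
    _ ≤ ‖(1 + T) ((1 + T)⁻¹ʳ x)‖ := hT.norm_apply_le _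
    _ = ‖((1 + T) * (1 + T)⁻¹ʳ) x‖ := rfl
    _ = 1 * ‖x‖ := by simp [Ring.mul_inverse_cancel _ hT.isUnit_one_add]

lemma norm_one_sub_ringInverse_one_add_mul_one_add_smul_le (hT : IsAccretive T) (c : 𝕜) :
    ‖1 - (1 + T)⁻¹ʳ * (1 + c • T)‖ ≤ ‖1 - c‖ := by
  rw [one_sub_ringInverse_one_add_mul_one_add_smul hT.isUnit_one_add, norm_smul]
  exact mul_le_of_le_one_right (norm_nonneg _) hT.norm_one_sub_ringInverse_one_add_le_one

end IsAccretive

theorem preconditioned_richardson_spectral_radius_bound_general [CompleteSpace E] {T : E →L[𝕜] E}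
    (hT : IsAccretive T) {γ : ℝ} (hγ : 0 < γ) (γt : 𝕜) :
    spectralRadius 𝕜 (1 - (1 + (γ : 𝕜) • T)⁻¹ʳ * (1 + γt • T)) ≤ ‖1 - γt / γ‖ₑ := by
  have hγ' : (γ : 𝕜) ≠ 0 := RCLike.ofReal_ne_zero.mpr hγ.ne'
  have h := (hT.ofReal_smul hγ.le).norm_one_sub_ringInverse_one_add_mul_one_add_smul_le (γt / γ)
  rw [smul_smul, div_mul_cancel₀ _ hγ'] at h
  exact (spectralRadius_le_enorm _).trans (enorm_le_iff_norm_le.mpr h)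

end Accretive

section Matrix

variable {𝕜 n : Type*} [RCLike 𝕜] [Fintype n] [DecidableEq n]

lemma isAccretive_toEuclideanCLM_iff {A : Matrix n n 𝕜} :
    IsAccretive (toEuclideanCLM (𝕜 := 𝕜) A) ↔ ∀ x, 0 ≤ RCLike.re (star x ⬝ᵥ A *ᵥ x) := by
  rw [← (WithLp.equiv 2 (n → 𝕜)).forall_congr_right]
  refine forall_congr' fun x => ?_
  rw [ContinuousLinearMap.reApplyInnerSelf_apply, inner_re_symm,
    EuclideanSpace.inner_eq_star_dotProduct, ofLp_toEuclideanCLM, dotProduct_comm]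
  rfl

lemma toEuclideanCLM_inv (A : Matrix n n 𝕜) :
    toEuclideanCLM (𝕜 := 𝕜) A⁻¹ = (toEuclideanCLM (𝕜 := 𝕜) A)⁻¹ʳ := by
  rw [nonsing_inv_eq_ringInverse, map_ringInverse]

end Matrix

/-- Quantitative spectral radius bound from the proof of Proposition 2: if
`Re (x*Ax) ≥ 0` for all `x` and `0 < γ̃ ≤ γ`, then the Richardson iteration matrix
`G̃ = I - (I+γA)⁻¹(I+γ̃A)` satisfies `ρ(G̃) ≤ 1 - γ̃/γ`. -/
theorem preconditioned_richardson_spectral_radius_bound (n : ℕ)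
    (A : Matrix (Fin n) (Fin n) ℂ)
    (hA : ∀ x : Fin n → ℂ, 0 ≤ (star x ⬝ᵥ A.mulVec x).re)
    (γ γt : ℝ) (hγt : 0 < γt) (hγ : γt ≤ γ) :
    spectralRadius ℂ (1 - (1 + (γ : ℂ) • A)⁻¹ * (1 + (γt : ℂ) • A)) ≤
      ENNReal.ofReal (1 - γt / γ) := by
  have hγ0 : 0 < γ := hγt.trans_le hγ
  have nonneg : 0 ≤ 1 - γt / γ := sub_nonneg.mpr ((div_le_one hγ0).mpr hγ)
  have norm_eq : ‖1 - (γt : ℂ) / γ‖ = 1 - γt / γ := mod_cast Complex.norm_of_nonneg nonneg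
  rw [← spectralRadius_map (toEuclideanCLM (n := Fin n) (𝕜 := ℂ)), ← norm_eq, ofReal_norm]
  simp only [map_sub, map_one, map_mul, map_add, map_smul, toEuclideanCLM_inv]
  exact preconditioned_richardson_spectral_radius_bound_general
    (isAccretive_toEuclideanCLM_iff.mpr hA) hγ0 (γt : ℂ)
end

section
/- Let A be an n×n complex matrix satisfying Re(x*Ax) ≥ 0 for all x ∈ ℂⁿ, let ρ(A) denote the spectral radius of A, and let γ, γ̃ be real numbers with 0 < γ̃ ≤ γ. Assume that γ̃·ρ(A) < 1 and that 1/(1 + γ·ρ(A)) < γ̃/γ. Then the spectral radius of G̃ := I − (I + γA)⁻¹(I + γ̃A) is strictly smaller than the spectral radius of G := −γ̃A, i.e., ρ(G̃) < γ̃·ρ(A). -/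
open Matrix

/- With `θ = γ̃/γ` we have `I + γ̃A = (1 - θ)I + θ(I + γA)`, so
`G̃ = (1 - θ)(I - (I + γA)⁻¹)`. The spectrum of `I + γA` lies in the half-plane `Re z ≥ 1`, where
`|1 - z⁻¹| ≤ 1`; hence `ρ(G̃) ≤ 1 - θ`, and the assumed lower bound on `θ` is equivalent to
`1 - θ < γ̃ ρ(A)`. -/

section RCLike

variable {𝕜 : Type*} [RCLike 𝕜]

open scoped ComplexOrder in
theorem re_nonneg_of_mem_spectrum_of_re_dotProduct_nonneg {ι : Type*} [Fintype ι]
    [DecidableEq ι] {A : Matrix ι ι 𝕜} (hA : ∀ x : ι → 𝕜, 0 ≤ RCLike.re (star x ⬝ᵥ A *ᵥ x))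
    {z : 𝕜} (hz : z ∈ spectrum 𝕜 A) : 0 ≤ RCLike.re z := by
  rw [← Matrix.spectrum_toLin', ← Module.End.hasEigenvalue_iff_mem_spectrum] at hz
  obtain ⟨x, hx⟩ := hz.exists_hasEigenvector
  have hAx : A *ᵥ x = z • x := by simpa only [toLin'_apply] using hx.apply_eq_smul
  obtain ⟨hpos, him⟩ := RCLike.pos_iff.mp (dotProduct_star_self_pos_iff.mpr hx.2)
  have hre : RCLike.re (star x ⬝ᵥ A *ᵥ x) = RCLike.re z * RCLike.re (star x ⬝ᵥ x) := by
    rw [hAx, dotProduct_smul, smul_eq_mul, RCLike.mul_re, him, mul_zero, sub_zero]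
  exact nonneg_of_mul_nonneg_left (hre ▸ hA x) hpos

theorem norm_one_sub_inv_le_one {z : 𝕜} (hz : 1 / 2 ≤ RCLike.re z) : ‖1 - z⁻¹‖ ≤ 1 := by
  have hz0 : z ≠ 0 := by
    rintro rfl
    norm_num at hz
  have hsub : ‖z - 1‖ ≤ ‖z‖ := by
    rw [← sq_le_sq₀ (norm_nonneg _) (norm_nonneg _), RCLike.norm_sq_eq_def, RCLike.norm_sq_eq_def]
    simp only [map_sub, RCLike.one_re, RCLike.one_im]
    linarith
  calc ‖1 - z⁻¹‖ = ‖z - 1‖ / ‖z‖ := by rw [← norm_div, sub_div, div_self hz0, one_div]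
    _ ≤ 1 := div_le_one_of_le₀ hsub (norm_nonneg _)

end RCLike

section Algebra

open scoped Ring

variable {𝕜 R : Type*} [Ring R]

theorem one_sub_inverse_one_add_smul_mul [Field 𝕜] [Algebra 𝕜 R] {a : R} {s : 𝕜} (hs : s ≠ 0)
    (ha : IsUnit (1 + s • a)) (t : 𝕜) :
    1 - (1 + s • a)⁻¹ʳ * (1 + t • a) = (1 - t / s) • (1 - (1 + s • a)⁻¹ʳ) := by
  have hsplit : 1 + t • a = (1 - t / s) • (1 : R) + (t / s) • (1 + s • a) := by
    rw [smul_add, smul_smul, div_mul_cancel₀ t hs]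
    module
  rw [hsplit, mul_add, mul_smul_comm, mul_smul_comm, mul_one, Ring.inverse_mul_cancel _ ha]
  module

theorem spectralRadius_smul [NormedField 𝕜] [Algebra 𝕜 R] (k : 𝕜) (a : R) :
    spectralRadius 𝕜 (k • a) = ‖k‖ₑ * spectralRadius 𝕜 a := by
  obtain rfl | hk := eq_or_ne k 0
  · rw [zero_smul, spectrum.spectralRadius_zero, enorm_zero, zero_mul]
  have hspec : spectrum 𝕜 (k • a) = (k • ·) '' spectrum 𝕜 a :=
    spectrum.unit_smul_eq_smul a (Units.mk0 k hk)
  simp only [spectralRadius, hspec, iSup_image, ENNReal.mul_iSup, ← enorm_eq_nnnorm, smul_eq_mul,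
    enorm_mul]

variable [RCLike 𝕜] [Algebra 𝕜 R]

theorem isUnit_of_forall_mem_spectrum_re_pos {b : R}
    (hb : ∀ z ∈ spectrum 𝕜 b, 0 < RCLike.re z) : IsUnit b :=
  spectrum.isUnit_of_zero_notMem 𝕜 fun h0 => (hb 0 h0).ne' RCLike.zero_re

theorem spectralRadius_one_sub_inverse_le_one {b : R}
    (hb : ∀ z ∈ spectrum 𝕜 b, 1 / 2 ≤ RCLike.re z) : spectralRadius 𝕜 (1 - b⁻¹ʳ) ≤ 1 := by
  obtain ⟨u, rfl⟩ := isUnit_of_forall_mem_spectrum_re_pos fun z hz =>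
    one_half_pos.trans_le (hb z hz)
  rw [Ring.inverse_unit, spectralRadius, ← map_one (algebraMap 𝕜 R), ← spectrum.singleton_sub_eq,
    ← spectrum.map_inv]
  refine iSup₂_le ?_
  rintro _ ⟨_, rfl, w, hw, rfl⟩
  have hnorm : ‖1 - w‖ ≤ 1 := by simpa only [inv_inv] using norm_one_sub_inv_le_one (hb w⁻¹ hw)
  exact_mod_cast hnorm

theorem one_le_re_of_mem_spectrum_one_add_smul {a : R}
    (ha : ∀ z ∈ spectrum 𝕜 a, 0 ≤ RCLike.re z) {γ : ℝ} (hγ : 0 < γ) {z : 𝕜}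
    (hz : z ∈ spectrum 𝕜 (1 + (γ : 𝕜) • a)) : 1 ≤ RCLike.re z := by
  have hγ0 : (γ : 𝕜) ≠ 0 := RCLike.ofReal_ne_zero.mpr hγ.ne'
  have hspec : spectrum 𝕜 ((γ : 𝕜) • a) = (fun w => (γ : 𝕜) • w) '' spectrum 𝕜 a :=
    spectrum.unit_smul_eq_smul a (Units.mk0 _ hγ0)
  rw [← map_one (algebraMap 𝕜 R), ← spectrum.singleton_add_eq, hspec] at hz
  obtain ⟨_, rfl, _, ⟨w, hw, rfl⟩, rfl⟩ := hz
  simpa only [map_add, RCLike.one_re, smul_eq_mul, RCLike.re_ofReal_mul, le_add_iff_nonneg_right]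
    using mul_nonneg hγ.le (ha w hw)

theorem spectralRadius_one_sub_inverse_mul_le {a : R}
    (ha : ∀ z ∈ spectrum 𝕜 a, 0 ≤ RCLike.re z) {γ : ℝ} (hγ : 0 < γ) (γt : ℝ) :
    spectralRadius 𝕜 (1 - (1 + (γ : 𝕜) • a)⁻¹ʳ * (1 + (γt : 𝕜) • a)) ≤
      ENNReal.ofReal |1 - γt / γ| := by
  have hre : ∀ z ∈ spectrum 𝕜 (1 + (γ : 𝕜) • a), 1 ≤ RCLike.re z := fun _ =>
    one_le_re_of_mem_spectrum_one_add_smul ha hγ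
  have hunit : IsUnit (1 + (γ : 𝕜) • a) :=
    isUnit_of_forall_mem_spectrum_re_pos fun z hz => one_pos.trans_le (hre z hz)
  have hcoeff : ‖1 - (γt : 𝕜) / γ‖ₑ = ENNReal.ofReal |1 - γt / γ| := by
    rw [← ofReal_norm, ← RCLike.norm_ofReal (K := 𝕜)]
    norm_cast
  rw [one_sub_inverse_one_add_smul_mul (RCLike.ofReal_ne_zero.mpr hγ.ne') hunit,
    spectralRadius_smul, hcoeff]
  exact mul_le_of_le_one_right' <| spectralRadius_one_sub_inverse_le_one fun z hz =>
    one_half_lt_one.le.trans (hre z hz)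

theorem preconditioned_richardson_faster_general {a : R}
    (ha : ∀ z ∈ spectrum 𝕜 a, 0 ≤ RCLike.re z) {γ γt : ℝ} (hγ : 0 < γ) (hle : γt ≤ γ)
    (hcond : 1 / (1 + γ * (spectralRadius 𝕜 a).toReal) < γt / γ) :
    (spectralRadius 𝕜 (1 - (1 + (γ : 𝕜) • a)⁻¹ʳ * (1 + (γt : 𝕜) • a))).toReal <
      γt * (spectralRadius 𝕜 a).toReal := by
  have hθ : 0 ≤ 1 - γt / γ := sub_nonneg.mpr (div_le_one_of_le₀ hle hγ.le)
  have hr : 0 ≤ (spectralRadius 𝕜 a).toReal := ENNReal.toReal_nonneg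
  calc _ ≤ 1 - γt / γ := ENNReal.toReal_le_of_le_ofReal hθ <| by
        simpa only [abs_of_nonneg hθ] using spectralRadius_one_sub_inverse_mul_le ha hγ γt
    _ < γt * (spectralRadius 𝕜 a).toReal := by
        rw [div_lt_div_iff₀ (by positivity) hγ] at hcond
        rw [one_sub_div hγ.ne', div_lt_iff₀ hγ]
        linarith

end Algebra

/-- Second assertion of Proposition 2: if `Re (x*Ax) ≥ 0` for all `x`, `0 < γ̃ ≤ γ`,
the unpreconditioned Richardson iteration converges (`γ̃ ρ(A) < 1`) and
`1/(1 + γ ρ(A)) < γ̃/γ`, then the preconditioned Richardson iteration matrix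
`G̃ = I - (I+γA)⁻¹(I+γ̃A)` satisfies `ρ(G̃) < γ̃ ρ(A) = ρ(G)` for `G = -γ̃A`. -/
theorem preconditioned_richardson_faster (n : ℕ)
    (A : Matrix (Fin n) (Fin n) ℂ)
    (hA : ∀ x : Fin n → ℂ, 0 ≤ (star x ⬝ᵥ A.mulVec x).re)
    (γ γt : ℝ) (hγt : 0 < γt) (hγ : γt ≤ γ)
    (hconv : γt * (spectralRadius ℂ A).toReal < 1)
    (hcond : 1 / (1 + γ * (spectralRadius ℂ A).toReal) < γt / γ) :
    (spectralRadius ℂ (1 - (1 + (γ : ℂ) • A)⁻¹ * (1 + (γt : ℂ) • A))).toReal <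
      γt * (spectralRadius ℂ A).toReal := by
  rw [nonsing_inv_eq_ringInverse]
  exact preconditioned_richardson_faster_general
    (fun _ => re_nonneg_of_mem_spectrum_of_re_dotProduct_nonneg hA)
    (hγt.trans_le hγ) hγ hcond
end
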